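/- Let F be an algebraically closed field of characteristic 0, φ ∈ F(x) of degree d ≥ 2, and α ∈ P¹(F) not φ-preperiodic. Then for all but finitely many m ∈ N, there exists η ∈ P¹(F) with η ≠ φ^{m-1}(α), φ(η) = φ^m(α), φ unramified at η, and φ dynamically unramified over η (η has an infinite backward orbit under φ consisting of points at which the relevant iterates of φ are unramified). -/

import Mathlib

open Polynomial

-- The extension of a rational function `φ ∈ F(x)` to a self-map of `P¹(F) = F ∪ {∞}`.
open scoped Classical in
noncomputable def evalP {F : Type*} [Field F] (φ : RatFunc F) (x : OnePoint F) : OnePoint F :=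
  match x with
  | Option.none =>
      if φ.denom.natDegree < φ.num.natDegree then OnePoint.infty
      else OnePoint.some (φ.num.coeff φ.denom.natDegree / φ.denom.leadingCoeff)
  | Option.some a =>
      if φ.denom.eval a = 0 then OnePoint.infty
      else OnePoint.some (φ.num.eval a / φ.denom.eval a)

-- The ramification index of `φ` at a point of `P¹(F)`.
open scoped Classical in
noncomputable def ramIdx {F : Type*} [Field F] (φ : RatFunc F) (x : OnePoint F) : ℕ :=
  match x with
  | Option.none =>
      if φ.denom.natDegree < φ.num.natDegree then φ.num.natDegree - φ.denom.natDegree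
      else max φ.num.natDegree φ.denom.natDegree -
        (φ.num - Polynomial.C (φ.num.coeff φ.denom.natDegree / φ.denom.leadingCoeff) * φ.denom).natDegree
  | Option.some a =>
      if φ.denom.eval a = 0 then φ.denom.rootMultiplicity a
      else (φ.num - Polynomial.C (φ.num.eval a / φ.denom.eval a) * φ.denom).rootMultiplicity a

/-!
Let `E` be a finite set of points of `P¹` containing the critical values. Every point outside `E`
has `d ≥ 2` unramified preimages, so a point `η` missed by the first `N` forward images of `E` has
at least `d ^ N` preimages under `φ^N`. If `η` is not periodic, the forward orbit of each `e ∈ E`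
meets this fibre at most once; as soon as `d ^ N > #E`, some `ξ` in the fibre lies on no forward
orbit of `E`, and all backward orbits of `ξ` are unramified. Finally, since the orbit of `α` is
injective, all but finitely many `φ^m(α)` avoid the first `N + 1` forward images of `E`, and any
preimage `η ≠ φ^(m-1)(α)` of such a point is missed by the first `N`.
-/

section Dynamics

open Function

variable {X : Type*} {f : X → X} {E : Set X} {d n : ℕ} {x y z : X}

lemma iterate_index_unique (hz : z ∉ periodicPts f) {i j : ℕ} (hi : f^[i] x = z)
    (hj : f^[j] x = z) : i = j := by
  wlog hij : i < j generalizing i j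
  · by_contra hne
    exact hne (this hj hi (by omega)).symm
  have hperiod : f^[j - i] z = z := by
    rw [← hi, ← iterate_add_apply, Nat.sub_add_cancel hij.le, hj, hi]
  exact absurd (mk_mem_periodicPts (Nat.sub_pos_of_lt hij) hperiod) hz

lemma notMem_periodicPts_of_iterate_notMem (h : f^[n] x ∉ periodicPts f) : x ∉ periodicPts f :=
  fun ⟨_, hp, hx⟩ => h (mk_mem_periodicPts hp (hx.apply_iterate n))

lemma iterate_notMem_periodicPts (hx : Injective (f^[·] x)) (m : ℕ) :
    f^[m] x ∉ periodicPts f := by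
  rintro ⟨p, hp, hperiod⟩
  have : p + m = m := hx ((iterate_add_apply f p m x).trans hperiod)
  omega

/-- The points reached from `E` by fewer than `n` steps of `f`; for `E` the set of critical values,
this is the part of the postcritical set of `f` coming from its first `n` iterates. -/
def postcritical (f : X → X) (E : Set X) (n : ℕ) : Set X :=
  ⋃ i < n, f^[i] '' E

lemma mem_postcritical : z ∈ postcritical f E n ↔ ∃ i < n, ∃ e ∈ E, f^[i] e = z := by
  simp only [postcritical, Set.mem_iUnion, Set.mem_image, exists_prop]

lemma finite_postcritical (hE : E.Finite) (n : ℕ) : (postcritical f E n).Finite :=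
  (Set.finite_Iio n).biUnion fun _ _ => hE.image _

lemma subset_postcritical_succ (n : ℕ) : E ⊆ postcritical f E (n + 1) :=
  fun e he => mem_postcritical.2 ⟨0, n.succ_pos, e, he, rfl⟩

lemma apply_mem_postcritical_succ (hx : x ∈ postcritical f E n) :
    f x ∈ postcritical f E (n + 1) := by
  obtain ⟨i, hi, e, he, rfl⟩ := mem_postcritical.1 hx
  exact mem_postcritical.2 ⟨i + 1, by omega, e, he, iterate_succ_apply' f i e⟩

lemma pow_le_encard_iterate_fiber (hfib : ∀ y ∉ E, d ≤ (f ⁻¹' {y}).encard)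
    (hz : z ∉ postcritical f E n) : (d : ℕ∞) ^ n ≤ (f^[n] ⁻¹' {z}).encard := by
  induction n generalizing z with
  | zero => simp
  | succ n ih =>
    have hzE : z ∉ E := fun h => hz (subset_postcritical_succ n h)
    obtain ⟨S, hSfib, hSd⟩ := Set.exists_subset_encard_eq (hfib z hzE)
    have hS : S.Finite := Set.finite_of_encard_eq_coe hSd
    have hfiber : ∀ s ∈ S, (d : ℕ∞) ^ n ≤ (f^[n] ⁻¹' {s}).encard := fun s hs =>
      ih fun hpost => hz (hSfib hs ▸ apply_mem_postcritical_succ hpost)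
    have hdisj : S.PairwiseDisjoint fun s => f^[n] ⁻¹' {s} := fun s _ t _ hst =>
      Disjoint.preimage _ (Set.disjoint_singleton.2 hst)
    calc (d : ℕ∞) ^ (n + 1) = hS.toFinset.card • (d : ℕ∞) ^ n := by
          rw [nsmul_eq_mul, ← hS.encard_eq_coe_toFinset_card, hSd, pow_succ']
      _ ≤ ∑ s ∈ hS.toFinset, (f^[n] ⁻¹' {s}).encard :=
          Finset.card_nsmul_le_sum _ _ _ fun s hs => hfiber s (hS.mem_toFinset.1 hs)
      _ = (⋃ s ∈ S, f^[n] ⁻¹' {s}).encard := by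
          rw [hS.encard_biUnion hdisj, finsum_mem_eq_finite_toFinset_sum _ hS]
      _ ≤ (f^[n + 1] ⁻¹' {z}).encard := by
          refine Set.encard_le_encard (Set.iUnion₂_subset fun s hs b hb => ?_)
          rw [Set.mem_preimage, iterate_succ_apply', show f^[n] b = s from hb]
          exact hSfib hs

lemma exists_iterate_eq_forall_notMem_postcritical (hz : z ∉ periodicPts f)
    (hcard : E.encard < (f^[n] ⁻¹' {z}).encard) :
    ∃ x, f^[n] x = z ∧ ∀ k, x ∉ postcritical f E k := by
  by_contra! hpost
  have horigin : ∀ x ∈ f^[n] ⁻¹' {z}, ∃ i, ∃ e ∈ E, f^[i] e = x := fun x hx => by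
    obtain ⟨k, hk⟩ := hpost x hx
    obtain ⟨i, -, hi⟩ := mem_postcritical.1 hk
    exact ⟨i, hi⟩
  choose! time origin horiginE hiterate using horigin
  have hreach : ∀ x ∈ f^[n] ⁻¹' {z}, f^[n + time x] (origin x) = z := fun x hx => by
    rw [iterate_add_apply, hiterate x hx, hx]
  have hinj : Set.InjOn origin (f^[n] ⁻¹' {z}) := fun x hx y hy hxy => by
    have htime := iterate_index_unique hz (hreach x hx) (hxy ▸ hreach y hy)
    rw [← hiterate x hx, ← hiterate y hy, hxy, Nat.add_left_cancel htime]
  exact hcard.not_ge (Set.encard_le_encard_of_injOn horiginE hinj)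

/-- The points `b` with an orbit `b, f b, …, f^[n] b = z` all of whose steps land outside `E`. If
`E` contains the critical values, these are iterated preimages of `z` at which the relevant iterate
of `f` is unramified. -/
def backwardOrbitAvoiding (f : X → X) (E : Set X) (z : X) : Set X :=
  {b | ∃ n, f^[n] b = z ∧ ∀ k < n, f^[k + 1] b ∉ E}

lemma mem_backwardOrbitAvoiding (hz : z ∉ postcritical f E n) (hx : f^[n] x = z) :
    x ∈ backwardOrbitAvoiding f E z := by
  refine ⟨n, hx, fun k hk he => hz (mem_postcritical.2 ⟨n - (k + 1), by omega, _, he, ?_⟩)⟩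
  rw [← iterate_add_apply, Nat.sub_add_cancel hk, hx]

lemma backwardOrbitAvoiding_subset (hy : y ∈ backwardOrbitAvoiding f E z) :
    backwardOrbitAvoiding f E y ⊆ backwardOrbitAvoiding f E z := by
  obtain ⟨m, rfl, hm⟩ := hy
  rintro b ⟨n, rfl, hn⟩
  refine ⟨m + n, iterate_add_apply f m n b, fun k hk => ?_⟩
  rcases lt_or_ge k n with hkn | hnk
  · exact hn k hkn
  · have := hm (k - n) (by omega)
    rwa [← iterate_add_apply, show k - n + 1 + n = k + 1 by omega] at this

lemma infinite_backwardOrbitAvoiding_of_forall_notMem_postcritical (hfib : Eᶜ ⊆ Set.range f)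
    (hz : z ∉ periodicPts f) (hpost : ∀ n, z ∉ postcritical f E n) :
    (backwardOrbitAvoiding f E z).Infinite := by
  have hne : ∀ n, ∃ b, f^[n] b = z := fun n => by
    have hfib' : ∀ y ∉ E, ((1 : ℕ) : ℕ∞) ≤ (f ⁻¹' {y}).encard := fun y hy => by
      rw [Nat.cast_one, Set.one_le_encard_iff_nonempty]
      exact hfib hy
    have hcard := pow_le_encard_iterate_fiber hfib' (hpost n)
    rw [Nat.cast_one, one_pow] at hcard
    exact Set.one_le_encard_iff_nonempty.1 hcard
  choose b hb using hne
  have hinj : Injective b := fun m n hmn => iterate_index_unique hz (hb m) (hmn ▸ hb n)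
  refine (Set.infinite_range_of_injective hinj).mono ?_
  rintro _ ⟨n, rfl⟩
  exact mem_backwardOrbitAvoiding (hpost n) (hb n)

lemma infinite_backwardOrbitAvoiding (hd : d ≠ 0) (hfib : ∀ y ∉ E, d ≤ (f ⁻¹' {y}).encard)
    (hcard : E.encard < d ^ n) (hz : z ∉ periodicPts f) (hpost : z ∉ postcritical f E n) :
    (backwardOrbitAvoiding f E z).Infinite := by
  obtain ⟨x, rfl, hx⟩ := exists_iterate_eq_forall_notMem_postcritical hz
    (hcard.trans_le (pow_le_encard_iterate_fiber hfib hpost))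
  have hrange : Eᶜ ⊆ Set.range f := fun y hy =>
    Set.one_le_encard_iff_nonempty.1
      (le_trans (mod_cast Nat.one_le_iff_ne_zero.2 hd) (hfib y hy))
  exact (infinite_backwardOrbitAvoiding_of_forall_notMem_postcritical hrange
    (notMem_periodicPts_of_iterate_notMem hz) hx).mono
      (backwardOrbitAvoiding_subset (mem_backwardOrbitAvoiding hpost rfl))

lemma exists_ne_infinite_backwardOrbitAvoiding (hd : 2 ≤ d)
    (hfib : ∀ y ∉ E, d ≤ (f ⁻¹' {y}).encard) (hcard : E.encard < d ^ n)
    (hz : z ∉ periodicPts f) (hpost : z ∉ postcritical f E (n + 1)) (x : X) :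
    ∃ η ≠ x, f η = z ∧ (backwardOrbitAvoiding f E η).Infinite := by
  have hzE : z ∉ E := fun h => hpost (subset_postcritical_succ n h)
  have hfiber : (f ⁻¹' {z}).Nontrivial := Set.one_lt_encard_iff_nontrivial.1
    (lt_of_lt_of_le (mod_cast hd) (hfib z hzE))
  obtain ⟨η, rfl, hne⟩ := hfiber.exists_ne x
  exact ⟨η, hne, rfl, infinite_backwardOrbitAvoiding (by omega) hfib hcard
    (notMem_periodicPts_of_iterate_notMem (n := 1) hz) fun h =>
      hpost (apply_mem_postcritical_succ h)⟩

end Dynamics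

section RationalMap

variable {F : Type*} [Field F] {φ : RatFunc F} {a c : F} {x y : OnePoint F}

lemma evalP_coe_of_eval_denom_eq_zero (ha : φ.denom.eval a = 0) :
    evalP φ a = OnePoint.infty :=
  if_pos ha

lemma evalP_coe_of_eval_denom_ne_zero (ha : φ.denom.eval a ≠ 0) :
    evalP φ a = ↑(φ.num.eval a / φ.denom.eval a) :=
  if_neg ha

lemma evalP_infty_of_natDegree_le (h : φ.num.natDegree ≤ φ.denom.natDegree) :
    evalP φ OnePoint.infty = ↑(φ.num.coeff φ.denom.natDegree / φ.denom.leadingCoeff) :=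
  if_neg h.not_gt

lemma evalP_coe_eq_coe_iff :
    evalP φ a = c ↔ φ.denom.eval a ≠ 0 ∧ φ.num.eval a = c * φ.denom.eval a := by
  by_cases ha : φ.denom.eval a = 0
  · simp [evalP_coe_of_eval_denom_eq_zero ha, ha]
  · rw [evalP_coe_of_eval_denom_ne_zero ha, OnePoint.coe_eq_coe, div_eq_iff ha]
    exact (and_iff_right ha).symm

/-- The polynomial whose roots are the finite points of the fibre of `φ` over `c`, the multiplicity
of a root being the ramification index of `φ` there. -/
noncomputable def fiberPolynomial (φ : RatFunc F) (c : F) : F[X] :=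
  φ.num - C c * φ.denom

lemma isRoot_fiberPolynomial : (fiberPolynomial φ c).IsRoot a ↔ evalP φ a = c := by
  have heval : (fiberPolynomial φ c).IsRoot a ↔ φ.num.eval a = c * φ.denom.eval a := by
    rw [fiberPolynomial, IsRoot.def, eval_sub, eval_mul, eval_C, sub_eq_zero]
  rw [heval, evalP_coe_eq_coe_iff, iff_and_self]
  intro hnum hdenom
  obtain ⟨u, v, huv⟩ := φ.isCoprime_num_denom
  simpa [hnum, hdenom] using congrArg (eval a) huv

lemma ramIdx_eq_rootMultiplicity_fiberPolynomial (h : evalP φ a = c) :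
    ramIdx φ a = (fiberPolynomial φ c).rootMultiplicity a := by
  obtain ⟨hdenom, hnum⟩ := evalP_coe_eq_coe_iff.1 h
  rw [← (div_eq_iff hdenom).2 hnum]
  exact if_neg hdenom

lemma natDegree_fiberPolynomial (hc : evalP φ OnePoint.infty ≠ c) :
    (fiberPolynomial φ c).natDegree = max φ.num.natDegree φ.denom.natDegree := by
  have hmul : (C c * φ.denom).natDegree ≤ φ.denom.natDegree := natDegree_C_mul_le _ _
  rcases lt_or_ge φ.denom.natDegree φ.num.natDegree with hlt | hle
  · rw [max_eq_left hlt.le]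
    exact natDegree_sub_eq_left_of_natDegree_lt (hmul.trans_lt hlt)
  · rw [max_eq_right hle]
    have hle' : (fiberPolynomial φ c).natDegree ≤ φ.denom.natDegree :=
      (natDegree_sub_le _ _).trans (max_le hle hmul)
    refine natDegree_eq_of_le_of_coeff_ne_zero hle' fun h => hc ?_
    rw [fiberPolynomial, coeff_sub, coeff_C_mul, coeff_natDegree, sub_eq_zero] at h
    rw [evalP_infty_of_natDegree_le hle, h,
      mul_div_cancel_right₀ c (leadingCoeff_ne_zero.2 φ.denom_ne_zero)]

lemma eval_denom_mul_eval_derivative_fiberPolynomial (h : evalP φ a = c) :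
    φ.denom.eval a * (derivative (fiberPolynomial φ c)).eval a =
      -(φ.num.wronskian φ.denom).eval a := by
  have hnum := (evalP_coe_eq_coe_iff.1 h).2
  simp only [fiberPolynomial, wronskian, derivative_sub, derivative_C_mul, eval_sub, eval_mul,
    eval_C, hnum]
  ring

lemma rootMultiplicity_fiberPolynomial_eq_one (h : evalP φ a = c)
    (hW : (φ.num.wronskian φ.denom).eval a ≠ 0) :
    (fiberPolynomial φ c).rootMultiplicity a = 1 := by
  have hderiv : (derivative (fiberPolynomial φ c)).eval a ≠ 0 := right_ne_zero_of_mul <|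
    (eval_denom_mul_eval_derivative_fiberPolynomial h).trans_ne (neg_ne_zero.2 hW)
  have hne : fiberPolynomial φ c ≠ 0 := fun h0 => hderiv (by simp [h0])
  refine le_antisymm (not_lt.1 fun hlt => hderiv ?_)
    ((rootMultiplicity_pos hne).2 (isRoot_fiberPolynomial.2 h))
  exact ((one_lt_rootMultiplicity_iff_isRoot hne).1 hlt).2

/-- The values of `φ` at its finite critical points, which are the roots of the Wronskian of
numerator and denominator, together with `∞` and `φ(∞)`. The last two are included, critical values
or not, so that outside this set only the affine chart matters. -/
def exceptionalValues (φ : RatFunc F) : Set (OnePoint F) :=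
  insert OnePoint.infty (evalP φ ''
    insert OnePoint.infty ((↑) '' {a : F | (φ.num.wronskian φ.denom).IsRoot a}))

lemma finite_exceptionalValues (hsep : φ.num.wronskian φ.denom ≠ 0) :
    (exceptionalValues φ).Finite :=
  ((((finite_setOfPred_isRoot hsep).image _).insert _).image _).insert _

lemma evalP_infty_mem_exceptionalValues : evalP φ OnePoint.infty ∈ exceptionalValues φ :=
  Or.inr ⟨_, Or.inl rfl, rfl⟩

lemma eval_wronskian_ne_zero_of_evalP_notMem (h : evalP φ a ∉ exceptionalValues φ) :
    (φ.num.wronskian φ.denom).eval a ≠ 0 :=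
  fun hW => h (Or.inr ⟨_, Or.inr ⟨a, hW, rfl⟩, rfl⟩)

lemma ramIdx_eq_one_of_evalP_notMem (h : evalP φ x ∉ exceptionalValues φ) : ramIdx φ x = 1 := by
  induction x using OnePoint.rec with
  | infty => exact absurd evalP_infty_mem_exceptionalValues h
  | coe a =>
    obtain ⟨c, hc⟩ := OnePoint.ne_infty_iff_exists.1 fun hinf => h (Or.inl hinf)
    rw [ramIdx_eq_rootMultiplicity_fiberPolynomial hc.symm]
    exact rootMultiplicity_fiberPolynomial_eq_one hc.symm
      (eval_wronskian_ne_zero_of_evalP_notMem h)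

lemma nodup_roots_fiberPolynomial (hc : ↑c ∉ exceptionalValues φ) :
    (fiberPolynomial φ c).roots.Nodup := by
  classical
  refine Multiset.nodup_iff_count_le_one.2 fun a => ?_
  rw [count_roots]
  by_cases ha : evalP φ a = c
  · exact (rootMultiplicity_fiberPolynomial_eq_one ha
      (eval_wronskian_ne_zero_of_evalP_notMem (ha ▸ hc))).le
  · rw [rootMultiplicity_eq_zero (mt isRoot_fiberPolynomial.1 ha)]
    exact zero_le_one

lemma le_encard_evalP_fiber [IsAlgClosed F] (hy : y ∉ exceptionalValues φ) :
    ↑(max φ.num.natDegree φ.denom.natDegree) ≤ (evalP φ ⁻¹' {y}).encard := by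
  classical
  obtain ⟨c, rfl⟩ := OnePoint.ne_infty_iff_exists.1 fun hinf => hy (Or.inl hinf)
  have hinf : evalP φ OnePoint.infty ≠ c := fun h => hy (h ▸ evalP_infty_mem_exceptionalValues)
  set roots := (fiberPolynomial φ c).roots.toFinset
  have hcard : roots.card = max φ.num.natDegree φ.denom.natDegree := by
    rw [Multiset.toFinset_card_of_nodup (nodup_roots_fiberPolynomial hy),
      IsAlgClosed.card_roots_eq_natDegree, natDegree_fiberPolynomial hinf]
  have hsub : ((↑) : F → OnePoint F) '' roots ⊆ evalP φ ⁻¹' {↑c} := by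
    rintro _ ⟨a, ha, rfl⟩
    exact isRoot_fiberPolynomial.1 (isRoot_of_mem_roots (Multiset.mem_toFinset.1 ha))
  rw [← hcard, ← Set.encard_coe_eq_coe_finsetCard, ← OnePoint.coe_injective.encard_image]
  exact Set.encard_le_encard hsub

lemma wronskian_num_denom_ne_zero [CharZero F]
    (hdeg : max φ.num.natDegree φ.denom.natDegree ≠ 0) : φ.num.wronskian φ.denom ≠ 0 := by
  rw [Ne, φ.isCoprime_num_denom.wronskian_eq_zero_iff, derivative_eq_zero, derivative_eq_zero]
  omega

end RationalMap

/-- The hypothesis `hsep` says that `φ` is separable: the Wronskian of coprime polynomials vanishes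
only if both have zero derivative. -/
theorem stmt_6_general (F : Type*) [Field F] [IsAlgClosed F] (φ : RatFunc F)
    (hd : 2 ≤ max φ.num.natDegree φ.denom.natDegree) (hsep : φ.num.wronskian φ.denom ≠ 0)
    (α : OnePoint F)
    (hwander : ∀ i j : ℕ, (evalP φ)^[i] α = (evalP φ)^[j] α → i = j) :
    {m : ℕ | 1 ≤ m ∧ ¬ ∃ η : OnePoint F,
        η ≠ (evalP φ)^[m - 1] α ∧
        evalP φ η = (evalP φ)^[m] α ∧
        ramIdx φ η = 1 ∧
        {b : OnePoint F | ∃ n, (evalP φ)^[n] b = η ∧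
            ∀ k < n, ramIdx φ ((evalP φ)^[k] b) = 1}.Infinite}.Finite := by
  set E := exceptionalValues φ
  set d := max φ.num.natDegree φ.denom.natDegree
  have hE : E.Finite := finite_exceptionalValues hsep
  obtain ⟨N, hN⟩ : ∃ N : ℕ, E.encard < (d : ℕ∞) ^ N :=
    ⟨E.ncard, by rw [← hE.cast_ncard_eq]; exact_mod_cast Nat.lt_pow_self hd⟩
  have hα : Function.Injective ((evalP φ)^[·] α) := hwander
  have hbad : {m | (evalP φ)^[m] α ∈ postcritical (evalP φ) E (N + 1)}.Finite :=
    (finite_postcritical hE _).preimage hα.injOn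
  refine hbad.subset ?_
  rintro m ⟨-, hm⟩
  by_contra hpost
  obtain ⟨η, hne, hη, hinf⟩ := exists_ne_infinite_backwardOrbitAvoiding hd
    (fun _ => le_encard_evalP_fiber) hN (iterate_notMem_periodicPts hα m) hpost
    ((evalP φ)^[m - 1] α)
  have hηE : evalP φ η ∉ E := hη ▸ fun h => hpost (subset_postcritical_succ N h)
  refine hm ⟨η, hne, hη, ramIdx_eq_one_of_evalP_notMem hηE, hinf.mono ?_⟩
  rintro b ⟨n, hb, havoid⟩
  refine ⟨n, hb, fun k hk => ramIdx_eq_one_of_evalP_notMem ?_⟩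
  rw [← Function.iterate_succ_apply' (evalP φ)]
  exact havoid k hk

/-- For `φ` of degree `d ≥ 2` over an algebraically closed field `F` of characteristic 0
and a non-preperiodic `α ∈ P¹(F)`, for all but finitely many `m ≥ 1` there exists
`η ≠ φ^{m-1}(α)` with `φ(η) = φ^m(α)`, `φ` unramified at `η`, and `φ` dynamically
unramified over `η` (infinitely many unramified backward iterated preimages). -/
theorem stmt_6 (F : Type*) [Field F] [IsAlgClosed F] [CharZero F]
    (φ : RatFunc F) (d : ℕ) (hd : 2 ≤ d)
    (hdeg : max φ.num.natDegree φ.denom.natDegree = d)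
    (α : OnePoint F)
    (hwander : ∀ i j : ℕ, (evalP φ)^[i] α = (evalP φ)^[j] α → i = j) :
    {m : ℕ | 1 ≤ m ∧ ¬ ∃ η : OnePoint F,
        η ≠ (evalP φ)^[m - 1] α ∧
        evalP φ η = (evalP φ)^[m] α ∧
        ramIdx φ η = 1 ∧
        {b : OnePoint F | ∃ n, (evalP φ)^[n] b = η ∧
            ∀ k < n, ramIdx φ ((evalP φ)^[k] b) = 1}.Infinite}.Finite := by
  subst hdeg
  exact stmt_6_general F φ hd (wronskian_num_denom_ne_zero (by omega)) α hwander
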